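/- Let β > −1 and let P be a monic real polynomial of degree |n⃗| satisfying the type II Jacobi–Piñeiro orthogonality conditions: ∫_0^1 x^j P(x) x^{α_i} (1−x)^β dx = 0 for every i ∈ {1,…,p} and every j ∈ {0,…,n_i−1}. Then for every x ∈ (0,1): P(x) (1−x)^β = (−1)^{|n⃗|} [∏_{q=1}^p (α_q+1)_{n_q}/(α_q+β+|n⃗|+1)_{n_q}] · ∑_{l=0}^∞ (−|n⃗|−β)_l [∏_{q=1}^p (α_q+n_q+1)_l/(α_q+1)_l] · x^l/l!, where the series on the right converges absolutely. -/

import Mathlib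

open Finset MeasureTheory

/-- The Pochhammer symbol (rising factorial) `(a)_m` for a real number `a`. -/
noncomputable def poch (a : ℝ) (m : ℕ) : ℝ := (ascPochhammer ℝ m).eval a

theorem hasSum_transfer {f g : ℕ → ℝ} {a b : ℝ} (h : HasSum f a) (hf : ∀ l, g l = f l)
    (hab : b = a) : HasSum g b := by
  rw [funext hf, hab]; exact h

theorem poch_zero (a : ℝ) : poch a 0 = 1 := by simp [poch]

theorem poch_succ (a : ℝ) (m : ℕ) : poch a (m + 1) = poch a m * (a + m) := by
  simp [poch, ascPochhammer_succ_eval]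

theorem poch_add (a : ℝ) (k m : ℕ) : poch a (k + m) = poch a k * poch (a + k) m := by
  induction m with
  | zero => simp [poch_zero]
  | succ m ih => rw [← add_assoc, poch_succ, ih, poch_succ]; push_cast; ring

theorem poch_pos {a : ℝ} (ha : 0 < a) (m : ℕ) : 0 < poch a m := ascPochhammer_pos m a ha

theorem poch_eq_prod (a : ℝ) (m : ℕ) : poch a m = ∏ j ∈ range m, (a + j) := by
  induction m with
  | zero => simp [poch_zero]
  | succ m ih => rw [poch_succ, ih, prod_range_succ]

theorem poch_ratio {a : ℝ} (ha : 0 < a) (n l : ℕ) :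
    poch (a + n) l / poch a l = poch (a + l) n / poch a n := by
  rw [div_eq_div_iff (poch_pos ha _).ne' (poch_pos ha _).ne', mul_comm, ← poch_add, mul_comm,
    ← poch_add, add_comm]

theorem desc_eq_poch (r : ℝ) (k : ℕ) :
    (descPochhammer ℝ k).eval r = (-1) ^ k * poch (-r) k := by
  rw [poch, ascPochhammer_eval_neg_eq_descPochhammer, ← mul_assoc, ← mul_pow]; simp

theorem desc_eq_poch' (r : ℝ) (k : ℕ) :
    (descPochhammer ℝ k).eval r = poch (r - k + 1) k := by
  rw [poch, descPochhammer_eval_eq_ascPochhammer]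

theorem gamma_poch {a : ℝ} (ha : 0 < a) (k : ℕ) :
    Real.Gamma (a + k) = Real.Gamma a * poch a k := by
  induction k with
  | zero => simp [poch_zero]
  | succ k ih =>
    rw [poch_succ]; push_cast
    rw [← add_assoc, Real.Gamma_add_one (by positivity), ih]; ring

theorem beta_aux {u v : ℝ} (hu : 0 < u) (hv : 0 < v) :
    IntegrableOn (fun x : ℝ => x ^ (u - 1) * (1 - x) ^ (v - 1)) (Set.Ioo 0 1) ∧
    ∫ x in Set.Ioo (0 : ℝ) 1, x ^ (u - 1) * (1 - x) ^ (v - 1) =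
      Real.Gamma u * Real.Gamma v / Real.Gamma (u + v) := by
  have hc := Complex.betaIntegral_convergent (u := u) (v := v) (by simpa) (by simpa)
  rw [intervalIntegrable_iff_integrableOn_Ioo_of_le zero_le_one] at hc
  have heq : Set.EqOn (fun x : ℝ => (x : ℂ) ^ ((u : ℂ) - 1) * (1 - (x : ℂ)) ^ ((v : ℂ) - 1))
      (fun x : ℝ => ((x ^ (u - 1) * (1 - x) ^ (v - 1) : ℝ) : ℂ)) (Set.Ioo 0 1) := by
    intro x hx
    have h1 : 0 ≤ x := hx.1.le
    have h2 : 0 ≤ 1 - x := by linarith [hx.2]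
    simp only [Complex.ofReal_mul]
    rw [Complex.ofReal_cpow h1, Complex.ofReal_cpow h2]
    push_cast
    rfl
  have hc' := (integrableOn_congr_fun heq measurableSet_Ioo).1 hc
  refine ⟨?_, ?_⟩
  · have := hc'.re
    simpa [IntegrableOn] using this
  · have hb := ProbabilityTheory.beta_eq_betaIntegralReal u v hu hv
    rw [ProbabilityTheory.beta, Complex.betaIntegral,
      intervalIntegral.integral_of_le zero_le_one, integral_Ioc_eq_integral_Ioo,
      setIntegral_congr_fun measurableSet_Ioo heq] at hb
    rw [hb, integral_complex_ofReal, Complex.ofReal_re]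

theorem binom_hasSum (a : ℝ) {x : ℝ} (hx : x ∈ Set.Ioo (0 : ℝ) 1) :
    HasSum (fun l : ℕ => poch a l * x ^ l / (Nat.factorial l : ℝ)) ((1 - x) ^ (-a)) := by
  have h := (Real.one_add_rpow_hasFPowerSeriesOnBall_zero (a := -a)).hasSum (y := -x)
    (by
      rw [← ENNReal.ofReal_one, Metric.eball_ofReal]
      simp [abs_of_pos hx.1, hx.2])
  simp only [binomialSeries_apply] at h
  refine hasSum_transfer h (fun l => ?_) (by rw [zero_add, ← sub_eq_add_neg])
  rw [List.ofFn_const, List.prod_replicate, smul_eq_mul, Ring.choose_eq_smul,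
    Polynomial.descPochhammer_smeval_eq_ascPochhammer,
    Polynomial.ascPochhammer_smeval_cast, Polynomial.ascPochhammer_smeval_eq_eval,
    ← descPochhammer_eval_eq_ascPochhammer, desc_eq_poch, neg_neg, neg_pow x, smul_eq_mul]
  have : ((-1 : ℝ) ^ l) * (-1) ^ l = 1 := by rw [← mul_pow]; simp
  field_simp
  linear_combination (-poch a l * x ^ l) * this

theorem desc_hasSum (a : ℝ) (k : ℕ) {x : ℝ} (hx : x ∈ Set.Ioo (0 : ℝ) 1) :
    HasSum (fun l : ℕ => (descPochhammer ℝ k).eval (l : ℝ) * (poch a l * x ^ l /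
      (Nat.factorial l : ℝ))) (poch a k * x ^ k * (1 - x) ^ (-a - k)) := by
  have h := (binom_hasSum (a + k) hx).mul_left (poch a k * x ^ k)
  rw [neg_add'] at h
  rw [← hasSum_nat_add_iff' k, sum_eq_zero, sub_zero]
  · refine hasSum_transfer h (fun m => ?_) rfl
    rw [add_comm m k, poch_add, pow_add, descPochhammer_eval_eq_descFactorial]
    have h1 := Nat.factorial_mul_descFactorial (Nat.le_add_right k m)
    rw [Nat.add_sub_cancel_left] at h1
    rw [← h1]
    have : ((k + m).descFactorial k : ℝ) ≠ 0 := by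
      norm_cast
      rw [Nat.descFactorial_eq_zero_iff_lt]; omega
    push_cast
    field_simp
  · intro i hi
    rw [descPochhammer_eval_coe_nat_of_lt (mem_range.1 hi), zero_mul]

theorem bernstein_exists (P : Polynomial ℝ) (S : ℕ) (hmonic : P.Monic) (hdeg : P.natDegree = S) :
    ∃ d : ℕ → ℝ, (∀ x ∈ Set.Ioo (0 : ℝ) 1,
      P.eval x = ∑ k ∈ range (S + 1), d k * (x ^ k * (1 - x) ^ (S - k))) ∧
      ∑ k ∈ range (S + 1), d k * (-1) ^ k = (-1) ^ S := by
  set G : Polynomial ℝ := ∑ j ∈ range (S + 1),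
    Polynomial.C (P.coeff j) * (Polynomial.X ^ j * (1 + Polynomial.X) ^ (S - j)) with hG
  have hGd : G.natDegree < S + 1 := by
    refine Nat.lt_succ_of_le (Polynomial.natDegree_sum_le_of_forall_le _ _ fun j hj => ?_)
    have := mem_range.1 hj
    refine (Polynomial.natDegree_C_mul_le _ _).trans (Polynomial.natDegree_mul_le.trans ?_)
    have h1 : (Polynomial.X ^ j : Polynomial ℝ).natDegree = j := by simp
    have h2 : ((1 + Polynomial.X : Polynomial ℝ) ^ (S - j)).natDegree ≤ (S - j) * 1 := by
      refine Polynomial.natDegree_pow_le_of_le _ ?_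
      rw [add_comm, ← Polynomial.C_1, Polynomial.natDegree_X_add_C]
    omega
  have hGe : ∀ t, G.eval t = ∑ j ∈ range (S + 1), P.coeff j * (t ^ j * (1 + t) ^ (S - j)) := by
    intro t; simp [hG, Polynomial.eval_finsetSum]
  refine ⟨G.coeff, fun x hx => ?_, ?_⟩
  · have hx1 : (1 - x) ≠ 0 := by linarith [hx.2]
    have h1 : P.eval x = (1 - x) ^ S * G.eval (x / (1 - x)) := by
      rw [hGe, Polynomial.eval_eq_sum_range' (n := S + 1) (by omega), mul_sum]
      refine sum_congr rfl fun j hj => ?_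
      have hj' : j ≤ S := by have := mem_range.1 hj; omega
      have : 1 + x / (1 - x) = 1 / (1 - x) := by field_simp; ring
      rw [this]
      obtain ⟨m, rfl⟩ := Nat.exists_eq_add_of_le hj'
      rw [Nat.add_sub_cancel_left, pow_add, div_pow, div_pow, one_pow]
      field_simp
    rw [h1, Polynomial.eval_eq_sum_range' hGd, mul_sum]
    refine sum_congr rfl fun j hj => ?_
    have hj' : j ≤ S := by have := mem_range.1 hj; omega
    obtain ⟨m, rfl⟩ := Nat.exists_eq_add_of_le hj'
    rw [Nat.add_sub_cancel_left, pow_add, div_pow]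
    field_simp
  · rw [← Polynomial.eval_eq_sum_range' hGd, hGe, sum_range_succ, sum_eq_zero]
    · have : P.coeff S = 1 := by rw [← hdeg]; exact hmonic
      simp [this]
    · intro j hj
      have : S - j ≠ 0 := by have := mem_range.1 hj; omega
      simp [this]

theorem moment_eq (S : ℕ) (c d : ℕ → ℝ) (β s : ℝ) (hβ : -1 < β) (hs : -1 < s)
    (hcd : ∀ k ∈ range (S + 1), d k = c k * poch (-(S : ℝ) - β) k) :
    ∫ x in Set.Ioo (0 : ℝ) 1, ∑ k ∈ range (S + 1), d k * (x ^ (s + k) * (1 - x) ^ (S - k + β)) =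
      Real.Gamma (s + 1) * Real.Gamma (S + β + 1) / Real.Gamma (S + s + β + 2) *
        ∑ k ∈ range (S + 1), c k * (descPochhammer ℝ k).eval (-s - 1) := by
  have key : ∀ k ∈ range (S + 1),
      IntegrableOn (fun x : ℝ => x ^ (s + k) * (1 - x) ^ (S - k + β)) (Set.Ioo 0 1) ∧
      ∫ x in Set.Ioo (0 : ℝ) 1, x ^ (s + k) * (1 - x) ^ (S - k + β) =
        Real.Gamma (s + k + 1) * Real.Gamma (S - k + β + 1) / Real.Gamma (S + s + β + 2) := by
    intro k hk
    have hk' : (k : ℝ) ≤ S := by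
      have := mem_range.1 hk
      exact_mod_cast (by omega : k ≤ S)
    have hk0 : (0 : ℝ) ≤ k := by positivity
    have := beta_aux (u := s + k + 1) (v := S - k + β + 1) (by linarith) (by linarith)
    rw [add_sub_cancel_right, add_sub_cancel_right] at this
    rwa [show s + k + 1 + (S - k + β + 1) = S + s + β + 2 by ring] at this
  rw [integral_finsetSum _ fun k hk => ((key k hk).1.const_mul _), mul_sum]
  refine sum_congr rfl fun k hk => ?_
  rw [integral_const_mul, (key k hk).2, hcd k hk]
  have hk' : (k : ℝ) ≤ S := by
    have := mem_range.1 hk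
    exact_mod_cast (by omega : k ≤ S)
  have g1 := gamma_poch (a := s + 1) (by linarith) k
  have g2 := gamma_poch (a := S - k + β + 1) (by linarith) k
  have e1 := desc_eq_poch (S + β) k
  have e2 := desc_eq_poch' (S + β) k
  have e3 := desc_eq_poch (-s - 1) k
  rw [show -(-s - 1) = s + 1 by ring] at e3
  rw [show (S : ℝ) + β - k + 1 = S - k + β + 1 by ring, e1, neg_add'] at e2
  rw [show (S : ℝ) - k + β + 1 + k = S + β + 1 by ring, ← e2] at g2
  rw [show s + 1 + k = s + k + 1 by ring] at g1
  rw [g1, g2, e3]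
  have : ((-1 : ℝ) ^ k) * (-1) ^ k = 1 := by rw [← mul_pow]; simp
  linear_combination (-(c k * poch (-(S : ℝ) - β) k * (Real.Gamma (s + 1) * poch (s + 1) k *
    Real.Gamma (S - k + β + 1) / Real.Gamma (S + s + β + 2)))) * this

theorem factor_poly (p : ℕ) (n : Fin p → ℕ) (S : ℕ) (hS : S = ∑ i, n i) (α : Fin p → ℝ)
    (hαint : ∀ i j, i ≠ j → ∀ z : ℤ, α i - α j ≠ (z : ℝ))
    (Q : Polynomial ℝ) (hQ : Q.natDegree ≤ S)
    (hroot : ∀ i, ∀ j < n i, Q.eval (-(α i + j) - 1) = 0) :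
    ∃ e : ℝ, ∀ y, Q.eval y = e * ∏ q, poch (α q + 1 + y) (n q) := by
  let r : (Σ i : Fin p, Fin (n i)) → ℝ := fun t => -(α t.1 + (t.2 : ℕ)) - 1
  have hr : Function.Injective r := by
    rintro ⟨i, j⟩ ⟨i', j'⟩ h
    simp only [r] at h
    by_cases hi : i = i'
    · subst hi
      have : ((j : ℕ) : ℝ) = (j' : ℕ) := by linarith
      have : j = j' := Fin.ext (by exact_mod_cast this)
      rw [this]
    · exact absurd (by push_cast; linarith) (hαint i i' hi ((j' : ℕ) - (j : ℕ) : ℤ))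
  set M : Polynomial ℝ := ∏ t, (Polynomial.X - Polynomial.C (r t)) with hM
  have hMm : M.Monic := Polynomial.monic_prod_of_monic _ _ fun t _ => Polynomial.monic_X_sub_C _
  have hMd : M.natDegree = S := by
    rw [hM, Polynomial.natDegree_prod_of_monic _ _ fun t _ => Polynomial.monic_X_sub_C _]
    simp [hS]
  have hdvd : M ∣ Q := by
    refine Finset.prod_dvd_of_coprime ?_ ?_
    · intro s _ t _ hst
      exact Polynomial.isCoprime_X_sub_C_of_isUnit_sub
        (sub_ne_zero.2 (hr.ne hst)).isUnit
    · intro t _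
      rw [Polynomial.dvd_iff_isRoot]
      exact hroot t.1 t.2 t.2.2
  obtain ⟨E, rfl⟩ := hdvd
  have hE : E.natDegree = 0 := by
    by_cases h0 : E = 0
    · simp [h0]
    · rw [hMm.natDegree_mul' h0, hMd] at hQ; omega
  rw [Polynomial.eq_C_of_natDegree_eq_zero hE]
  refine ⟨E.coeff 0, fun y => ?_⟩
  rw [Polynomial.eval_mul, Polynomial.eval_C, mul_comm, hM, Polynomial.eval_prod,
    Fintype.prod_sigma]
  congr 1
  refine prod_congr rfl fun q _ => ?_
  rw [poch_eq_prod, ← Fin.prod_univ_eq_prod_range (fun j => α q + 1 + y + (j : ℝ))]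
  refine prod_congr rfl fun j _ => ?_
  simp [r]; ring

/-- Hypergeometric series representation of the weighted type II Jacobi–Piñeiro
polynomial on `(0,1)`, with the series converging absolutely. -/
theorem jacobiPineiro_typeII_series
    (p : ℕ) (hp : 0 < p) (n : Fin p → ℕ) (hn : ∀ i, 0 < n i)
    (S : ℕ) (hS : S = ∑ i, n i)
    (α : Fin p → ℝ) (hα : ∀ i, -1 < α i)
    (hαint : ∀ i j, i ≠ j → ∀ z : ℤ, α i - α j ≠ (z : ℝ))
    (β : ℝ) (hβ : -1 < β)
    (P : Polynomial ℝ) (hmonic : P.Monic) (hdeg : P.natDegree = S)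
    (horth : ∀ i, ∀ j < n i,
      ∫ x in Set.Ioo (0 : ℝ) 1, x ^ j * P.eval x * x ^ α i * (1 - x) ^ β = 0) :
    ∀ x ∈ Set.Ioo (0 : ℝ) 1,
      Summable (fun l : ℕ =>
        |poch (-(S : ℝ) - β) l *
            (∏ q, poch (α q + n q + 1) l / poch (α q + 1) l) * x ^ l /
          (Nat.factorial l : ℝ)|) ∧
      P.eval x * (1 - x) ^ β =
        (-1 : ℝ) ^ S *
          (∏ q, poch (α q + 1) (n q) / poch (α q + β + S + 1) (n q)) *
          ∑' l : ℕ,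
            poch (-(S : ℝ) - β) l *
                (∏ q, poch (α q + n q + 1) l / poch (α q + 1) l) * x ^ l /
              (Nat.factorial l : ℝ) := by
  intro x hx
  obtain ⟨d, hd, hd1⟩ := bernstein_exists P S hmonic hdeg
  have hne : ∀ k ∈ range (S + 1), poch (-(S : ℝ) - β) k ≠ 0 := by
    intro k hk
    have hk' : (k : ℝ) ≤ S := by
      have := mem_range.1 hk
      exact_mod_cast (by omega : k ≤ S)
    have h1 := desc_eq_poch (S + β) k
    have h2 := desc_eq_poch' (S + β) k
    have h3 := poch_pos (a := S + β - k + 1) (by linarith) k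
    rw [← h2, h1, neg_add'] at h3
    intro h0
    rw [h0] at h3
    simp at h3
  set c : ℕ → ℝ := fun k => d k / poch (-(S : ℝ) - β) k with hc
  have hcd : ∀ k ∈ range (S + 1), d k = c k * poch (-(S : ℝ) - β) k := fun k hk => by
    rw [hc]; field_simp [hne k hk]
  set Q : Polynomial ℝ := ∑ k ∈ range (S + 1), Polynomial.C (c k) * descPochhammer ℝ k with hQ
  have hQe : ∀ y, Q.eval y = ∑ k ∈ range (S + 1), c k * (descPochhammer ℝ k).eval y := by
    intro y; simp [hQ, Polynomial.eval_finsetSum]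
  have hQd : Q.natDegree ≤ S := by
    refine Polynomial.natDegree_sum_le_of_forall_le _ _ fun k hk => ?_
    refine (Polynomial.natDegree_C_mul_le _ _).trans ?_
    rw [descPochhammer_natDegree]
    have := mem_range.1 hk; omega
  have hroot : ∀ i, ∀ j < n i, Q.eval (-(α i + j) - 1) = 0 := by
    intro i j hj
    have hs : -1 < α i + j := by
      have := hα i
      have : (0 : ℝ) ≤ j := by positivity
      linarith
    have hm := moment_eq S c d β (α i + j) hβ hs hcd
    rw [← hQe] at hm
    have h0 := horth i j hj
    rw [setIntegral_congr_fun measurableSet_Ioo (g := fun x : ℝ => ∑ k ∈ range (S + 1),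
      d k * (x ^ (α i + j + k) * (1 - x) ^ (S - k + β)))] at h0
    · rw [h0] at hm
      have g1 := Real.Gamma_pos_of_pos (s := α i + j + 1) (by linarith)
      have hS0 : (0 : ℝ) ≤ S := by positivity
      have g2 := Real.Gamma_pos_of_pos (s := S + β + 1) (by linarith)
      have g3 := Real.Gamma_pos_of_pos (s := S + (α i + j) + β + 2) (by linarith)
      have := (div_pos (mul_pos g1 g2) g3).ne'
      exact (mul_eq_zero.1 hm.symm).resolve_left this
    · intro y hy
      have hy0 : 0 < y := hy.1
      have hy1 : 0 < 1 - y := by linarith [hy.2]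
      simp only
      rw [hd y hy, mul_sum, sum_mul, sum_mul]
      refine sum_congr rfl fun k hk => ?_
      have hk' : k ≤ S := by have := mem_range.1 hk; omega
      rw [← Nat.cast_sub hk', Real.rpow_add hy0, Real.rpow_add hy0, Real.rpow_add hy1,
        Real.rpow_natCast, Real.rpow_natCast, Real.rpow_natCast]
      ring
  obtain ⟨e, he⟩ := factor_poly p n S hS α hαint Q hQd hroot
  have hQS : Q.eval (S + β) = (-1) ^ S := by
    rw [hQe, ← hd1]
    refine sum_congr rfl fun k hk => ?_
    rw [hcd k hk, desc_eq_poch, neg_add']; ring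
  have hQS' := he (S + β)
  rw [hQS] at hQS'
  have hsum : HasSum (fun l : ℕ => Q.eval (l : ℝ) * (poch (-(S : ℝ) - β) l * x ^ l /
      (Nat.factorial l : ℝ))) (P.eval x * (1 - x) ^ β) := by
    have h := hasSum_sum (s := range (S + 1))
      fun k _ => (desc_hasSum (-(S : ℝ) - β) k hx).mul_left (c k)
    refine hasSum_transfer h (fun l => ?_) ?_
    · rw [hQe, sum_mul]
      exact sum_congr rfl fun k _ => by ring
    · have hy1 : 0 < 1 - x := by linarith [hx.2]
      rw [hd x hx, sum_mul]
      refine sum_congr rfl fun k hk => ?_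
      have hk' : k ≤ S := by have := mem_range.1 hk; omega
      rw [hcd k hk, show -(-(S : ℝ) - β) - k = ((S - k : ℕ) : ℝ) + β by
        rw [Nat.cast_sub hk']; ring, Real.rpow_add hy1, Real.rpow_natCast]
      ring
  have hα1 : ∀ q, 0 < α q + 1 := fun q => by linarith [hα q]
  have hA : ∏ q, poch (α q + 1) (n q) ≠ 0 :=
    prod_ne_zero_iff.2 fun q _ => (poch_pos (hα1 q) _).ne'
  have hB : ∏ q, poch (α q + β + S + 1) (n q) ≠ 0 := by
    refine prod_ne_zero_iff.2 fun q _ => ?_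
    intro h0
    have h1 : ∏ q, poch (α q + 1 + (S + β)) (n q) = 0 := by
      refine prod_eq_zero (mem_univ q) ?_
      rw [← h0]; congr 1; ring
    rw [h1, mul_zero] at hQS'
    exact pow_ne_zero S (by norm_num : (-1 : ℝ) ≠ 0) hQS'
  have hBe : ∏ q, poch (α q + 1 + (S + β)) (n q) = ∏ q, poch (α q + β + S + 1) (n q) :=
    prod_congr rfl fun q _ => by congr 1; ring
  rw [hBe] at hQS'
  have he0 : e ≠ 0 := by
    rintro rfl
    rw [zero_mul] at hQS'
    exact pow_ne_zero S (by norm_num : (-1 : ℝ) ≠ 0) hQS'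
  set K := (-1 : ℝ) ^ S * (∏ q, poch (α q + 1) (n q) / poch (α q + β + S + 1) (n q)) with hK
  have hKe : K = e * ∏ q, poch (α q + 1) (n q) := by
    rw [hK, prod_div_distrib, hQS']; field_simp
  have hK0 : K ≠ 0 := by rw [hKe]; exact mul_ne_zero he0 hA
  have hfin : HasSum (fun l : ℕ => poch (-(S : ℝ) - β) l *
      (∏ q, poch (α q + n q + 1) l / poch (α q + 1) l) * x ^ l / (Nat.factorial l : ℝ))
      (K⁻¹ * (P.eval x * (1 - x) ^ β)) := by
    refine hasSum_transfer (hsum.mul_left K⁻¹) (fun l => ?_) rfl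
    have : ∏ q, poch (α q + n q + 1) l / poch (α q + 1) l =
        (∏ q, poch (α q + 1 + l) (n q)) / ∏ q, poch (α q + 1) (n q) := by
      rw [← prod_div_distrib]
      refine prod_congr rfl fun q _ => ?_
      rw [← poch_ratio (hα1 q), add_right_comm]
    rw [this, he, hKe]
    field_simp
  refine ⟨hfin.summable.abs, ?_⟩
  rw [hfin.tsum_eq, mul_inv_cancel_left₀ hK0]
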